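/- Let F be a number field and p a prime number. The map 𝒪 ↦ 𝒪[1/p] is a bijection from the set of all orders in F that are maximal at p onto the set of all ℤ[1/p]-orders in F. -/

import Mathlib

/-!
The inverse of `O ↦ O[1/p]` is `Λ ↦ Λ ∩ 𝓞_F`.

The heart of the matter is `maximalAt_iff`: an order `O` is maximal at `p` if and only if every
algebraic integer `x` of `F` has a multiple `m x ∈ O` with `m` prime to `p`.

Granted this, let `O₁`, `O₂` be maximal at `p` with `O₁[1/p] = O₂[1/p]`. An element `x ∈ O₁` is
integral, so `m x ∈ O₂` with `m` prime to `p`, while also `p ^ n x ∈ O₂`; hence `x ∈ O₂` by Bézout.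
For surjectivity, `Λ ∩ 𝓞_F` is an order; it is maximal at `p` because `Λ` contains a positive
multiple of each algebraic integer and `p` is invertible in `Λ`; and it localizes to `Λ` because
for `x ∈ Λ` some `p ^ n x` stabilises the finitely generated `ℤ`-module spanned by the generators
of `Λ`, hence is integral (`IsOrderAway.exists_isIntegral`).

The proof of `maximalAt_iff` compares coordinates. If `w ∈ F` lies in the `ℤ_p`-span of an order
`O`, its coordinates in a `ℤ`-basis of `O` are rationals in `ℤ_p`, so `m w ∈ O` with `m` prime to
`p` (`IsPadicExt.exists_mul_mem`). For the converse one must show that the integral closure of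
`ℤ_p` in `ℚ_p ⊗ F` is spanned by `𝓞_F`. Approximating coordinates by rationals reduces this to
elements `x ∈ F` (`IsPadicExt.exists_isIntegral`), where after scaling by an integer prime to `p`
some `p ^ k x` is integral. Truncating an integral equation of `x` over `ℤ_p` modulo a high power
of `p` gives a monic `g ∈ ℤ[X]` with `g(x)` in the `ℤ_p`-span of `𝓞_F`. Since `g(x)` also lies in
`𝓞_F[1/p]`, it is integral over `ℤ`, and therefore so is `x`.
-/

open scoped TensorProduct

/-- An order in a number field `F`: a subring that is finitely generated as a ℤ-module
and spans `F` over ℚ. -/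
def IsOrder {F : Type*} [Field F] [Algebra ℚ F] (O : Subring F) : Prop :=
  O.toAddSubgroup.FG ∧ Submodule.span ℚ (O : Set F) = ⊤

/-- A ℤ[1/p]-order in `F`: a subring containing `1/p` (i.e. a ℤ[1/p]-subalgebra),
finitely generated as a ℤ[1/p]-module, and spanning `F` over ℚ.  Finite generation over
ℤ[1/p] is expressed as: there is a finite set `s ⊆ Λ` such that every `x ∈ Λ`
satisfies `p ^ n * x ∈ span_ℤ s` for some `n`. -/
def IsOrderAway {F : Type*} [Field F] [Algebra ℚ F] (p : ℕ) (Λ : Subring F) : Prop :=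
  (p : F)⁻¹ ∈ Λ ∧
  (∃ s : Finset F, (s : Set F) ⊆ Λ ∧
    ∀ x ∈ Λ, ∃ n : ℕ, (p : F) ^ n * x ∈ Submodule.span ℤ (s : Set F)) ∧
  Submodule.span ℚ (Λ : Set F) = ⊤

/-- A subring `O` of `F` is maximal at the prime `l` if the image of `O ⊗_ℤ ℤ_l`
(equivalently, the ℤ_l-subalgebra generated by the image of `O`) in `F ⊗_ℚ ℚ_l` is the
integral closure of `ℤ_l` there. -/
def MaximalAt {F : Type*} [Field F] [Algebra ℚ F] (O : Subring F) (l : ℕ) : Prop :=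
  l.Prime ∧ ∀ [Fact l.Prime],
    letI : Algebra ℤ_[l] (ℚ_[l] ⊗[ℚ] F) :=
      ((algebraMap ℚ_[l] (ℚ_[l] ⊗[ℚ] F)).comp (algebraMap ℤ_[l] ℚ_[l])).toAlgebra
    Algebra.adjoin ℤ_[l]
        ((Algebra.TensorProduct.includeRight : F →ₐ[ℚ] ℚ_[l] ⊗[ℚ] F) '' (O : Set F)) =
      integralClosure ℤ_[l] (ℚ_[l] ⊗[ℚ] F)

/-- The localization `𝒪[1/p]` of an order: the subring generated by `𝒪` and `1/p`. -/
def locAway {F : Type*} [Field F] (p : ℕ) (O : Subring F) : Subring F :=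
  O ⊔ Subring.closure {(p : F)⁻¹}

/-! ### Subrings and inversion of `p` -/

/-- If two coprime integers both multiply `x` into a subring, then `x` lies in it. -/
lemma Subring.mem_of_coprime_mul_mem {F : Type*} [Field F] (O : Subring F) {m k : ℕ}
    (h : m.Coprime k) {x : F} (hm : (m : F) * x ∈ O) (hk : (k : F) * x ∈ O) : x ∈ O := by
  obtain ⟨u, v, huv⟩ := Nat.isCoprime_iff_coprime.mpr h
  have h1 : (u : F) * m + v * k = 1 := by exact_mod_cast congrArg (Int.cast : ℤ → F) huv
  have h2 : x = (u : F) * (m * x) + v * (k * x) := by linear_combination (-x) * h1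
  rw [h2]
  exact add_mem (mul_mem (intCast_mem O u) hm) (mul_mem (intCast_mem O v) hk)

/-- A subring spanning `F` over `ℚ` contains a positive integer multiple of every element. -/
lemma Subring.exists_natCast_mul_mem {F : Type*} [Field F] [NumberField F] (O : Subring F)
    (h : Submodule.span ℚ (O : Set F) = ⊤) (x : F) :
    ∃ N : ℕ, N ≠ 0 ∧ (N : F) * x ∈ O := by
  have hx : x ∈ Submodule.span ℚ (O : Set F) := h ▸ Submodule.mem_top
  induction hx using Submodule.span_induction with
  | mem y hy => exact ⟨1, one_ne_zero, by simpa using hy⟩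
  | zero => exact ⟨1, one_ne_zero, by simp⟩
  | add y z _ _ hy hz =>
    obtain ⟨N, hN, hy⟩ := hy
    obtain ⟨M, hM, hz⟩ := hz
    refine ⟨N * M, mul_ne_zero hN hM, ?_⟩
    have : ((N * M : ℕ) : F) * (y + z) = M * (N * y) + N * (M * z) := by push_cast; ring
    rw [this]
    exact add_mem (mul_mem (natCast_mem O M) hy) (mul_mem (natCast_mem O N) hz)
  | smul q y _ hy =>
    obtain ⟨N, hN, hy⟩ := hy
    refine ⟨q.den * N, mul_ne_zero q.den_nz hN, ?_⟩
    have hq : (q.den : F) * (q : F) = q.num := by exact_mod_cast Rat.den_mul_eq_num q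
    have : ((q.den * N : ℕ) : F) * (q • y) = q.num * (N * y) := by
      rw [Algebra.smul_def, eq_ratCast]; push_cast
      linear_combination (N * y : F) * hq
    rw [this]
    exact mul_mem (intCast_mem O _) hy

lemma mem_locAway_iff {F : Type*} [Field F] [CharZero F] {p : ℕ} (hp : p.Prime) (O : Subring F)
    (x : F) : x ∈ locAway p O ↔ ∃ n : ℕ, (p : F) ^ n * x ∈ O := by
  have hp0 : (p : F) ≠ 0 := Nat.cast_ne_zero.mpr hp.ne_zero
  constructor
  · intro hx
    rw [locAway, ← Subring.closure_eq O, ← Subring.closure_union] at hx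
    induction hx using Subring.closure_induction with
    | mem y hy =>
      rcases hy with hy | hy
      · exact ⟨0, by simpa using hy⟩
      · rw [Set.mem_singleton_iff] at hy
        exact ⟨1, by simp [hy, hp0]⟩
    | zero => exact ⟨0, by simp⟩
    | one => exact ⟨0, by simp⟩
    | add y z _ _ hy hz =>
      obtain ⟨n, hn⟩ := hy
      obtain ⟨k, hk⟩ := hz
      refine ⟨n + k, ?_⟩
      have : (p : F) ^ (n + k) * (y + z) = p ^ k * (p ^ n * y) + p ^ n * (p ^ k * z) := by ring
      rw [this]
      exact add_mem (mul_mem (pow_mem (natCast_mem O p) k) hn)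
        (mul_mem (pow_mem (natCast_mem O p) n) hk)
    | neg y _ hy =>
      obtain ⟨n, hn⟩ := hy
      exact ⟨n, by simpa using hn⟩
    | mul y z _ _ hy hz =>
      obtain ⟨n, hn⟩ := hy
      obtain ⟨k, hk⟩ := hz
      refine ⟨n + k, ?_⟩
      have : (p : F) ^ (n + k) * (y * z) = (p ^ n * y) * (p ^ k * z) := by ring
      rw [this]
      exact mul_mem hn hk
  · rintro ⟨n, hn⟩
    have h1 : (p : F)⁻¹ ∈ locAway p O :=
      (le_sup_right : _ ≤ locAway p O) (Subring.subset_closure (Set.mem_singleton _))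
    have h2 : x = ((p : F)⁻¹) ^ n * (p ^ n * x) := by
      rw [← mul_assoc, ← mul_pow, inv_mul_cancel₀ hp0, one_pow, one_mul]
    rw [h2]
    exact mul_mem (pow_mem h1 n) ((le_sup_left : _ ≤ locAway p O) hn)

/-! ### Orders as lattices -/

lemma IsOrder.isLattice {F : Type*} [Field F] [NumberField F] {O : Subring F} (hO : IsOrder O) :
    Submodule.IsLattice ℚ (AddSubgroup.toIntSubmodule O.toAddSubgroup) where
  fg := by
    rw [Submodule.fg_iff_addSubgroup_fg]
    exact hO.1
  span_eq_top := hO.2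

/-- An order is the set of vectors with integral coordinates in some `ℚ`-basis of `F`. -/
lemma IsOrder.exists_basis {F : Type*} [Field F] [NumberField F] {O : Subring F}
    (hO : IsOrder O) : ∃ (n : ℕ) (b : Module.Basis (Fin n) ℚ F),
      ∀ x, x ∈ O ↔ ∀ i, ∃ z : ℤ, b.repr x i = z := by
  have := hO.isLattice
  let L := AddSubgroup.toIntSubmodule O.toAddSubgroup
  have : Module.Free ℤ L := Submodule.IsLattice.free ℚ L
  let c := Module.finBasis ℤ L
  have hc : ∀ i, c.extendOfIsLattice ℚ i = (c i : F) := fun i => by simp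
  refine ⟨_, c.extendOfIsLattice ℚ, fun x => ⟨fun hx i => ?_, fun h => ?_⟩⟩
  · refine ⟨c.repr ⟨x, hx⟩ i, ?_⟩
    have h1 : x = ∑ j, ((c.repr ⟨x, hx⟩ j : ℤ) : ℚ) • c.extendOfIsLattice ℚ j := by
      have := congrArg (Subtype.val : L → F) (c.sum_repr ⟨x, hx⟩)
      simp only [Submodule.coe_sum, Submodule.coe_smul] at this
      simp only [hc, Int.cast_smul_eq_zsmul]
      exact this.symm
    conv_lhs => rw [h1]
    rw [Module.Basis.repr_sum_self]
  · choose z hz using h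
    rw [← (c.extendOfIsLattice ℚ).sum_repr x]
    refine sum_mem fun i _ => ?_
    rw [hz, hc, Int.cast_smul_eq_zsmul]
    exact zsmul_mem (c i).2 _

/-- The ring of integers, as a subring of `F`. -/
def intRing (F : Type*) [Field F] : Subring F := (integralClosure ℤ F).toSubring

lemma mem_intRing {F : Type*} [Field F] {x : F} : x ∈ intRing F ↔ IsIntegral ℤ x := Iff.rfl

lemma IsOrder.of_le_intRing {F : Type*} [Field F] [NumberField F] {O : Subring F}
    (hO : O ≤ intRing F) (h : Submodule.span ℚ (O : Set F) = ⊤) : IsOrder O := by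
  refine ⟨?_, h⟩
  rw [← AddSubgroup.toIntSubmodule_toAddSubgroup O.toAddSubgroup,
    ← Submodule.fg_iff_addSubgroup_fg]
  have : IsNoetherian ℤ (Subalgebra.toSubmodule (integralClosure ℤ F)) :=
    inferInstanceAs (IsNoetherian ℤ (NumberField.RingOfIntegers F))
  have h2 : AddSubgroup.toIntSubmodule O.toAddSubgroup ≤
    Subalgebra.toSubmodule (integralClosure ℤ F) := hO
  have := isNoetherian_of_le h2
  exact Module.Finite.iff_fg.mp inferInstance

lemma exists_natCast_mul_isIntegral {F : Type*} [Field F] [NumberField F] (x : F) :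
    ∃ N : ℕ, N ≠ 0 ∧ IsIntegral ℤ ((N : F) * x) := by
  have hx : IsAlgebraic ℤ x :=
    (IsFractionRing.isAlgebraic_iff ℤ ℚ F).mpr (Algebra.IsAlgebraic.isAlgebraic x)
  obtain ⟨y, hy, h⟩ := hx.exists_integral_multiple
  refine ⟨y.natAbs, Int.natAbs_ne_zero.mpr hy, ?_⟩
  rw [zsmul_eq_mul] at h
  rcases Int.natAbs_eq y with h' | h'
  · rw [h'] at h; simpa using h
  · rw [h'] at h; simpa using h.neg

lemma isOrder_intRing (F : Type*) [Field F] [NumberField F] : IsOrder (intRing F) := by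
  refine IsOrder.of_le_intRing le_rfl (eq_top_iff.mpr fun x _ => ?_)
  obtain ⟨N, hN, h⟩ := exists_natCast_mul_isIntegral x
  have hN' : (N : F) ≠ 0 := Nat.cast_ne_zero.mpr hN
  have : x = (N : ℚ)⁻¹ • ((N : F) * x) := by
    rw [Algebra.smul_def]; simp [hN']
  rw [this]
  exact Submodule.smul_mem _ _ (Submodule.subset_span h)

lemma IsOrder.le_intRing {F : Type*} [Field F] [NumberField F] {O : Subring F}
    (hO : IsOrder O) : O ≤ intRing F := by
  intro x hx
  refine IsIntegral.of_mem_of_fg (subalgebraOfSubring O) ?_ x hx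
  exact hO.isLattice.fg

/-- The descent step for surjectivity: a power of `p` makes each element of a
`ℤ[1/p]`-order integral over `ℤ`, because it then stabilises the finitely generated
`ℤ`-module spanned by the generators. -/
lemma IsOrderAway.exists_isIntegral {F : Type*} [Field F] [NumberField F] {p : ℕ}
    (hp : p.Prime) {Λ : Subring F} (hΛ : IsOrderAway p Λ) {x : F} (hx : x ∈ Λ) :
    ∃ n : ℕ, IsIntegral ℤ ((p : F) ^ n * x) := by
  obtain ⟨-, ⟨s, hs, hgen⟩, -⟩ := hΛ
  have hp0 : (p : F) ≠ 0 := Nat.cast_ne_zero.mpr hp.ne_zero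
  choose! k hk using fun y (hy : y ∈ s) => hgen (x * y) (mul_mem hx (hs hy))
  refine ⟨s.sup k, isIntegral_of_smul_mem_submodule (Submodule.span ℤ (s : Set F)) ?_
    (Submodule.fg_span s.finite_toSet) _ fun y hy => ?_⟩
  · obtain ⟨n, hn⟩ := hgen 1 (one_mem Λ)
    intro h
    rw [h, Submodule.mem_bot, mul_one] at hn
    exact pow_ne_zero n hp0 hn
  · induction hy using Submodule.span_induction with
    | mem y hy =>
      have h1 : ((p : F) ^ s.sup k * x) • y =
          ((p ^ (s.sup k - k y) : ℕ) : ℤ) • ((p : F) ^ k y * (x * y)) := by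
        rw [smul_eq_mul, zsmul_eq_mul]
        push_cast
        rw [← mul_assoc ((p : F) ^ _), ← pow_add, Nat.sub_add_cancel (Finset.le_sup hy)]
        ring
      rw [h1]
      exact Submodule.smul_mem _ _ (hk y hy)
    | zero => simp
    | add y z _ _ hy hz => rw [smul_add]; exact add_mem hy hz
    | smul a y _ hy => rw [smul_comm]; exact Submodule.smul_mem _ _ hy

/-! ### Orders inside the `p`-adic completion -/

lemma adjoin_image_toSubmodule {F : Type*} [Field F] {p : ℕ} [Fact p.Prime] {V : Type*}
    [CommRing V] [Algebra ℤ_[p] V] {ι : F →+* V} (O : Subring F) :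
    Subalgebra.toSubmodule (Algebra.adjoin ℤ_[p] (ι '' O)) =
      Submodule.span ℤ_[p] (ι '' (O : Set F)) := by
  rw [Algebra.adjoin_eq_span]
  have : Submonoid.closure (ι '' (O : Set F)) = (O.map ι).toSubmonoid :=
    Submonoid.closure_eq (O.map ι).toSubmonoid
  rw [this]
  rfl

lemma mem_span_of_coprime_mul_mem {F : Type*} [Field F] {p : ℕ} [Fact p.Prime] {V : Type*}
    [CommRing V] [Algebra ℤ_[p] V] {ι : F →+* V} {O : Subring F}
    {m : ℕ} (hm : m.Coprime p) {x : F} (h : (m : F) * x ∈ O) :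
    ι x ∈ Submodule.span ℤ_[p] (ι '' (O : Set F)) := by
  have hu : IsUnit (m : ℤ_[p]) := PadicInt.isUnit_iff.mpr (by
    rw [PadicInt.norm_natCast_eq_one_iff]; exact hm.symm)
  obtain ⟨u, hu⟩ := hu
  have : ι x = (↑u⁻¹ : ℤ_[p]) • ι ((m : F) * x) := by
    rw [map_mul, map_natCast, ← map_natCast (algebraMap ℤ_[p] V), ← hu, ← Algebra.smul_def,
      smul_smul, Units.inv_mul, one_smul]
  rw [this]
  exact Submodule.smul_mem _ _ (Submodule.subset_span (Set.mem_image_of_mem _ h))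

/-- `ι : F → V` exhibits the `ℚ_p`-algebra `V` as the base change `ℚ_p ⊗ F`: every `ℚ`-basis of
`F` has a companion `ℚ_p`-basis of `V` in which `ι x` has the same coordinates as `x`. -/
def IsPadicExt {F : Type*} [Field F] [NumberField F] (p : ℕ) [Fact p.Prime] {V : Type*}
    [CommRing V] [Algebra ℚ_[p] V] (ι : F →+* V) : Prop :=
  ∀ (n : ℕ) (b : Module.Basis (Fin n) ℚ F), ∃ c : Module.Basis (Fin n) ℚ_[p] V,
    ∀ x i, c.repr (ι x) i = ((b.repr x i : ℚ) : ℚ_[p])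

section PadicExt

variable {F : Type*} [Field F] [NumberField F] {p : ℕ} [Fact p.Prime] {V : Type*} [CommRing V]
  [Algebra ℚ_[p] V] [Algebra ℤ_[p] V] [IsScalarTower ℤ_[p] ℚ_[p] V] {ι : F →+* V}

lemma coprime_den_of_norm_le_one {q : ℚ} (h : ‖(q : ℚ_[p])‖ ≤ 1) : q.den.Coprime p := by
  have := (Padic.norm_rat_le_one_iff_padicValuation_le_one p).mp h
  rw [Rat.padicValuation_le_one_iff] at this
  exact ((Nat.Prime.coprime_iff_not_dvd Fact.out).mpr this).symm

/-- An element of `F` in the `ℤ_p`-span of an order `O` lies in `O` localized at `p`: the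
denominators of its coordinates in a `ℤ`-basis of `O` are prime to `p`. -/
lemma IsPadicExt.exists_mul_mem (hι : IsPadicExt p ι) {O : Subring F} (hO : IsOrder O) {w : F}
    (hw : ι w ∈ Submodule.span ℤ_[p] (ι '' O)) : ∃ m : ℕ, m.Coprime p ∧ (m : F) * w ∈ O := by
  obtain ⟨n, b, hb⟩ := hO.exists_basis
  obtain ⟨c, hc⟩ := hι n b
  have key : ∀ v ∈ Submodule.span ℤ_[p] (ι '' (O : Set F)), ∀ i, ‖c.repr v i‖ ≤ 1 := by
    intro v hv
    induction hv using Submodule.span_induction with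
    | mem v hv =>
      obtain ⟨x, hx, rfl⟩ := hv
      intro i
      obtain ⟨z, hz⟩ := (hb x).mp hx i
      rw [hc, hz, Rat.cast_intCast]
      exact Padic.norm_int_le_one z
    | zero => simp
    | add u v _ _ hu hv =>
      intro i
      rw [map_add, Finsupp.add_apply]
      exact (Padic.nonarchimedean _ _).trans (max_le (hu i) (hv i))
    | smul a v _ hv =>
      intro i
      rw [← IsScalarTower.algebraMap_smul ℚ_[p] a v, map_smul, Finsupp.smul_apply, smul_eq_mul,
        norm_mul]
      exact mul_le_one₀ a.2 (norm_nonneg _) (hv i)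
  have hden : ∀ i, (b.repr w i).den.Coprime p := fun i =>
    coprime_den_of_norm_le_one (by rw [← hc]; exact key _ hw i)
  refine ⟨∏ i, (b.repr w i).den, Nat.Coprime.prod_left fun i _ => hden i, (hb _).mpr fun i => ?_⟩
  refine ⟨(∏ j ∈ Finset.univ.erase i, ((b.repr w j).den : ℤ)) * (b.repr w i).num, ?_⟩
  have h1 : ((∏ j, (b.repr w j).den : ℕ) : F) * w = ((∏ j, (b.repr w j).den : ℕ) : ℚ) • w := by
    rw [Algebra.smul_def]; simp
  rw [h1, map_smul, Finsupp.smul_apply, smul_eq_mul,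
    ← Finset.prod_erase_mul _ _ (Finset.mem_univ i)]
  push_cast
  rw [mul_assoc, Rat.den_mul_eq_num]

lemma exists_pow_mul_coprime (N : ℕ) (hN : N ≠ 0) :
    ∃ k m : ℕ, m.Coprime p ∧ N = p ^ k * m := by
  have hp : p.Prime := Fact.out
  obtain ⟨k, m, hm, h⟩ := Nat.exists_eq_pow_mul_and_not_dvd hN p hp.ne_one
  exact ⟨k, m, ((Nat.Prime.coprime_iff_not_dvd hp).mpr hm).symm, h⟩

/-- An integral equation over `ℤ_p` may be truncated modulo `p ^ D` to one over `ℤ`. -/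
lemma exists_int_approx (f : Polynomial ℤ_[p]) (hf : f.Monic) (hd : f.natDegree ≠ 0) (D : ℕ) :
    ∃ (g : Polynomial ℤ) (r : Polynomial ℤ_[p]), g.Monic ∧ g.natDegree ≠ 0 ∧
      r.natDegree ≤ f.natDegree ∧
      g.map (Int.castRingHom ℤ_[p]) = f + Polynomial.C ((p : ℤ_[p]) ^ D) * r := by
  have h : ∀ a : ℤ_[p], ∃ z : ℤ, ∃ t, (z : ℤ_[p]) = a + (p : ℤ_[p]) ^ D * t := fun a => by
    obtain ⟨t, ht⟩ := Ideal.mem_span_singleton.mp (PadicInt.appr_spec D a)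
    exact ⟨(a.appr D : ℤ), -t, by push_cast; linear_combination -ht⟩
  choose z t hz using h
  have hdeg : (∑ k ∈ Finset.range f.natDegree, Polynomial.C (z (f.coeff k)) *
      Polynomial.X ^ k).degree < (f.natDegree : WithBot ℕ) := by
    rw [← Polynomial.mem_degreeLT]
    refine sum_mem fun k hk => Polynomial.mem_degreeLT.mpr ?_
    exact (Polynomial.degree_C_mul_X_pow_le _ _).trans_lt
      (by exact_mod_cast Finset.mem_range.mp hk)
  refine ⟨Polynomial.X ^ f.natDegree + ∑ k ∈ Finset.range f.natDegree,
      Polynomial.C (z (f.coeff k)) * Polynomial.X ^ k,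
    ∑ k ∈ Finset.range f.natDegree, Polynomial.C (t (f.coeff k)) * Polynomial.X ^ k,
    Polynomial.monic_X_pow_add hdeg, ?_, ?_, ?_⟩
  · rwa [Polynomial.natDegree_eq_of_degree_eq_some (n := f.natDegree) (by
      rw [Polynomial.degree_add_eq_left_of_degree_lt (by rwa [Polynomial.degree_X_pow]),
        Polynomial.degree_X_pow])]
  · refine Polynomial.natDegree_sum_le_of_forall_le _ _ fun k hk => ?_
    exact (Polynomial.natDegree_C_mul_X_pow_le _ _).trans (Finset.mem_range.mp hk).le
  · refine Eq.trans ?_ (congrArg (· + _) hf.as_sum.symm)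
    rw [Polynomial.map_add, Polynomial.map_sum, add_assoc, Finset.mul_sum,
      ← Finset.sum_add_distrib]
    congr 1
    · simp
    · refine Finset.sum_congr rfl fun k _ => ?_
      rw [Polynomial.map_mul, Polynomial.map_pow, Polynomial.map_X, Polynomial.map_C,
        eq_intCast, hz, Polynomial.C_add, Polynomial.C_mul]
      ring

/-- An element of `F` integral over `ℤ_p` is integral over `ℤ` up to a factor prime to `p`. -/
lemma IsPadicExt.exists_isIntegral (hι : IsPadicExt p ι) {x : F} (hx : IsIntegral ℤ_[p] (ι x)) :
    ∃ m : ℕ, m.Coprime p ∧ IsIntegral ℤ ((m : F) * x) := by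
  obtain ⟨N, hN, hNx⟩ := exists_natCast_mul_isIntegral x
  obtain ⟨k, m, hm, rfl⟩ := exists_pow_mul_coprime (p := p) N hN
  refine ⟨m, hm, ?_⟩
  set y : F := (m : F) * x with hy
  have hpy : IsIntegral ℤ ((p : F) ^ k * y) := by
    rw [hy, ← mul_assoc]; exact_mod_cast hNx
  have hιy : IsIntegral ℤ_[p] (ι y) := by
    rw [hy, map_mul, map_natCast]
    exact mul_mem (natCast_mem (integralClosure ℤ_[p] V) m) hx
  obtain ⟨f₀, hf₀, hf₀y⟩ := hιy
  rw [← Polynomial.aeval_def] at hf₀y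
  -- The factor `X` guarantees a positive degree.
  obtain ⟨f, hf, hfd, hfy⟩ : ∃ f : Polynomial ℤ_[p], f.Monic ∧ f.natDegree ≠ 0 ∧
      Polynomial.aeval (ι y) f = 0 :=
    ⟨f₀ * Polynomial.X, hf₀.mul Polynomial.monic_X,
      by rw [hf₀.natDegree_mul Polynomial.monic_X]; simp, by simp [hf₀y]⟩
  -- `p ^ (d * k)` clears the denominators of all powers of `y` up to the `d`-th.
  have hpow : ∀ D i : ℕ, i * k ≤ D → (p : F) ^ D * y ^ i ∈ intRing F := by
    intro D i hi
    have : (p : F) ^ D * y ^ i = p ^ (D - i * k) * (p ^ k * y) ^ i := by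
      rw [mul_pow _ y, ← pow_mul, ← mul_assoc, ← pow_add, mul_comm k i, Nat.sub_add_cancel hi]
    rw [this]
    exact mul_mem (pow_mem (natCast_mem _ p) _) (pow_mem (mem_intRing.mpr hpy) i)
  obtain ⟨g, r, hg, hgd, hrd, hgr⟩ := exists_int_approx f hf hfd (f.natDegree * k)
  have h1 : ι (Polynomial.aeval y g) ∈ Submodule.span ℤ_[p] (ι '' (intRing F : Set F)) := by
    have h2 : ι (Polynomial.aeval y g) = Polynomial.aeval (ι y)
        (g.map (Int.castRingHom ℤ_[p])) := by
      rw [Polynomial.aeval_def, Polynomial.hom_eval₂, Polynomial.aeval_def, Polynomial.eval₂_map]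
      congr 1
      exact RingHom.ext_int _ _
    rw [h2, hgr, map_add, hfy, zero_add, map_mul, Polynomial.aeval_C, Polynomial.aeval_eq_sum_range,
      Finset.mul_sum]
    refine sum_mem fun i hi => ?_
    have h3 : algebraMap ℤ_[p] V ((p : ℤ_[p]) ^ (f.natDegree * k)) * r.coeff i • ι y ^ i =
        r.coeff i • ι ((p : F) ^ (f.natDegree * k) * y ^ i) := by
      simp
    rw [h3]
    refine Submodule.smul_mem _ _ (Submodule.subset_span (Set.mem_image_of_mem _ (hpow _ _ ?_)))
    exact Nat.mul_le_mul_right k ((Nat.lt_succ_iff.mp (Finset.mem_range.mp hi)).trans hrd)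
  obtain ⟨m', hm', hw⟩ := hι.exists_mul_mem (isOrder_intRing F) h1
  have hw' : ((p ^ (g.natDegree * k) : ℕ) : F) * Polynomial.aeval y g ∈ intRing F := by
    rw [Polynomial.aeval_eq_sum_range, Finset.mul_sum]
    refine sum_mem fun i hi => ?_
    rw [mul_smul_comm]
    refine zsmul_mem ?_ _
    push_cast
    exact hpow _ _ (Nat.mul_le_mul_right k (Nat.lt_succ_iff.mp (Finset.mem_range.mp hi)))
  exact .of_aeval_monic hg hgd
    (Subring.mem_of_coprime_mul_mem _ (Nat.Coprime.pow_right _ hm') hw hw')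

/-- An order is maximal at `p` exactly when it contains every algebraic integer of `F` up to a
factor prime to `p`. -/
lemma IsPadicExt.adjoin_eq_iff (hι : IsPadicExt p ι) {O : Subring F} (hO : IsOrder O) :
    Algebra.adjoin ℤ_[p] (ι '' O) = integralClosure ℤ_[p] V ↔
      ∀ x : F, IsIntegral ℤ x → ∃ m : ℕ, m.Coprime p ∧ (m : F) * x ∈ O := by
  have hintegral : ∀ x : F, IsIntegral ℤ x → IsIntegral ℤ_[p] (ι x) := fun x hx =>
    (hx.map (ι.toIntAlgHom)).tower_top
  constructor
  · intro h x hx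
    refine hι.exists_mul_mem hO ?_
    rw [← adjoin_image_toSubmodule, h]
    exact hintegral x hx
  · intro h
    refine le_antisymm (Algebra.adjoin_le ?_) fun y hy => ?_
    · rintro _ ⟨x, hx, rfl⟩
      exact hintegral x (hO.le_intRing hx)
    rw [← Subalgebra.mem_toSubmodule, adjoin_image_toSubmodule]
    have hspan : ∀ x : F, IsIntegral ℤ x → ι x ∈ Submodule.span ℤ_[p] (ι '' (O : Set F)) :=
      fun x hx => by
        obtain ⟨m, hm, hmx⟩ := h x hx
        exact mem_span_of_coprime_mul_mem hm hmx
    obtain ⟨n, b, hb⟩ := (isOrder_intRing F).exists_basis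
    obtain ⟨c, hc⟩ := hι n b
    have hbi : ∀ i, IsIntegral ℤ (b i) := fun i => (hb _).mpr fun j => by
      refine ⟨if i = j then 1 else 0, ?_⟩
      rw [b.repr_self, Finsupp.single_apply]
      split_ifs <;> simp
    have hcb : ∀ i, c i = ι (b i) := fun i => by
      apply c.repr.injective
      ext j
      rw [hc, b.repr_self, c.repr_self, Finsupp.single_apply, Finsupp.single_apply]
      split_ifs <;> simp
    -- Rational approximation of the coordinates reduces to an element of `F`.
    choose q hq using fun i => Padic.rat_dense p (c.repr y i) one_pos
    set x : F := ∑ i, q i • b i with hx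
    have hyx : y - ι x ∈ Submodule.span ℤ_[p] (ι '' (O : Set F)) := by
      rw [← c.sum_repr (y - ι x)]
      refine sum_mem fun i _ => ?_
      have h1 : ‖c.repr (y - ι x) i‖ ≤ 1 := by
        rw [map_sub, Finsupp.sub_apply, hc, hx, b.repr_sum_self]
        exact (hq i).le
      let a : ℤ_[p] := ⟨c.repr (y - ι x) i, h1⟩
      have h2 : c.repr (y - ι x) i • c i = a • ι (b i) := by
        rw [hcb]
        exact IsScalarTower.algebraMap_smul ℚ_[p] a (ι (b i))
      rw [h2]
      exact Submodule.smul_mem _ _ (hspan _ (hbi i))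
    have hιx : IsIntegral ℤ_[p] (ι x) := by
      have h1 : y - ι x ∈ integralClosure ℤ_[p] V := by
        refine (Submodule.span_le.mpr ?_ : _ ≤ Subalgebra.toSubmodule (integralClosure ℤ_[p] V)) hyx
        rintro _ ⟨z, hz, rfl⟩
        exact hintegral z (hO.le_intRing hz)
      have h2 := sub_mem hy h1
      rwa [sub_sub_cancel] at h2
    obtain ⟨m, hm, hmx⟩ := hι.exists_isIntegral hιx
    obtain ⟨m', hm', hmx'⟩ := h _ hmx
    have h3 : ι x ∈ Submodule.span ℤ_[p] (ι '' (O : Set F)) :=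
      mem_span_of_coprime_mul_mem (Nat.Coprime.mul_left hm' hm)
        (by push_cast; rwa [mul_assoc])
    simpa using add_mem hyx h3

end PadicExt

/-- Maximality at `p` expressed inside `F`: the order agrees with the ring of integers after
localizing at `p`. -/
lemma maximalAt_iff {F : Type*} [Field F] [NumberField F] {p : ℕ} (hp : p.Prime) {O : Subring F}
    (hO : IsOrder O) : MaximalAt O p ↔
      ∀ x : F, IsIntegral ℤ x → ∃ m : ℕ, m.Coprime p ∧ (m : F) * x ∈ O := by
  have : Fact p.Prime := ⟨hp⟩
  let ι : F →+* ℚ_[p] ⊗[ℚ] F :=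
    (Algebra.TensorProduct.includeRight : F →ₐ[ℚ] ℚ_[p] ⊗[ℚ] F)
  have hι : IsPadicExt p ι := fun n b => by
    refine ⟨Algebra.TensorProduct.basis ℚ_[p] b, fun x i => ?_⟩
    change (Algebra.TensorProduct.basis ℚ_[p] b).repr (1 ⊗ₜ x) i = _
    rw [Algebra.TensorProduct.basis_repr_tmul]
    simp
  let : Algebra ℤ_[p] (ℚ_[p] ⊗[ℚ] F) :=
    ((algebraMap ℚ_[p] (ℚ_[p] ⊗[ℚ] F)).comp (algebraMap ℤ_[p] ℚ_[p])).toAlgebra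
  have := IsScalarTower.of_algebraMap_eq (R := ℤ_[p]) (S := ℚ_[p]) (A := ℚ_[p] ⊗[ℚ] F)
    fun _ => rfl
  have key := hι.adjoin_eq_iff hO
  exact ⟨fun h => key.mp h.2, fun h => ⟨hp, fun {_} => key.mpr h⟩⟩

/-! ### The bijection -/

/-- The map `𝒪 ↦ 𝒪[1/p]` is a bijection from the set of orders in `F` that are
maximal at `p` onto the set of ℤ[1/p]-orders in `F`. -/
theorem locAway_bijOn (F : Type*) [Field F] [NumberField F] (p : ℕ) (hp : p.Prime) :
    Set.BijOn (locAway p) {O : Subring F | IsOrder O ∧ MaximalAt O p}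
      {Λ : Subring F | IsOrderAway p Λ} := by
  have : Fact p.Prime := ⟨hp⟩
  refine ⟨?_, ?_, ?_⟩
  · rintro O ⟨hO, -⟩
    have hle : O ≤ locAway p O := le_sup_left
    refine ⟨(le_sup_right : _ ≤ locAway p O) (Subring.subset_closure (Set.mem_singleton _)), ?_, ?_⟩
    · obtain ⟨s, hs⟩ := hO.isLattice.fg
      refine ⟨s, fun x hx => hle ?_, fun x hx => ?_⟩
      · have : x ∈ AddSubgroup.toIntSubmodule O.toAddSubgroup := hs ▸ Submodule.subset_span hx
        exact this
      · rw [hs]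
        exact (mem_locAway_iff hp O x).mp hx
    · exact top_le_iff.mp (hO.2.ge.trans (Submodule.span_mono hle))
  · -- By symmetry, only one inclusion is needed.
    have key : ∀ O₁ O₂ : Subring F, IsOrder O₁ → IsOrder O₂ → MaximalAt O₂ p →
        locAway p O₁ = locAway p O₂ → O₁ ≤ O₂ := by
      intro O₁ O₂ h₁ h₂ hmax h x hx
      have hx' : x ∈ locAway p O₂ := h ▸ (le_sup_left : O₁ ≤ locAway p O₁) hx
      obtain ⟨n, hn⟩ := (mem_locAway_iff hp O₂ x).mp hx'
      obtain ⟨m, hm, hmx⟩ := (maximalAt_iff hp h₂).mp hmax x (h₁.le_intRing hx)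
      exact O₂.mem_of_coprime_mul_mem (Nat.Coprime.pow_right n hm) hmx (by exact_mod_cast hn)
    rintro O₁ ⟨h₁, m₁⟩ O₂ ⟨h₂, m₂⟩ h
    exact le_antisymm (key _ _ h₁ h₂ m₂ h) (key _ _ h₂ h₁ m₁ h.symm)
  · intro Λ hΛ
    have hpF : (p : F) ≠ 0 := Nat.cast_ne_zero.mpr hp.ne_zero
    have hord : IsOrder (Λ ⊓ intRing F) := by
      refine IsOrder.of_le_intRing inf_le_right (top_le_iff.mp (hΛ.2.2.ge.trans ?_))
      refine Submodule.span_le.mpr fun x hx => ?_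
      obtain ⟨N, hN, h⟩ := exists_natCast_mul_isIntegral x
      have hN' : (N : F) ≠ 0 := Nat.cast_ne_zero.mpr hN
      have hxN : x = (N : ℚ)⁻¹ • ((N : F) * x) := by
        rw [Algebra.smul_def]; simp [hN']
      rw [hxN]
      exact Submodule.smul_mem _ _ (Submodule.subset_span ⟨mul_mem (natCast_mem Λ N) hx, h⟩)
    refine ⟨Λ ⊓ intRing F, ⟨hord, (maximalAt_iff hp hord).mpr fun x hx => ?_⟩, ?_⟩
    · -- Powers of `p` are invertible in `Λ`, so the multiplier can be taken prime to `p`.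
      obtain ⟨N, hN, hNx⟩ := Λ.exists_natCast_mul_mem hΛ.2.2 x
      obtain ⟨k, m, hm, rfl⟩ := exists_pow_mul_coprime (p := p) N hN
      refine ⟨m, hm, ?_, mul_mem (natCast_mem _ m) (mem_intRing.mpr hx)⟩
      have h1 : (m : F) * x = (p : F)⁻¹ ^ k * (((p ^ k * m : ℕ) : F) * x) := by
        push_cast
        rw [← mul_assoc, ← mul_assoc, ← mul_pow, inv_mul_cancel₀ hpF, one_pow, one_mul]
      rw [h1]
      exact mul_mem (pow_mem hΛ.1 k) hNx
    · refine le_antisymm (sup_le inf_le_left ?_) fun x hx => ?_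
      · exact Subring.closure_le.mpr (Set.singleton_subset_iff.mpr hΛ.1)
      · obtain ⟨n, hn⟩ := hΛ.exists_isIntegral hp hx
        exact (mem_locAway_iff hp _ x).mpr
          ⟨n, mul_mem (pow_mem (natCast_mem Λ p) n) hx, hn⟩
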